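/- Maneuver-detection characterization: assume the initial covariance matrix Σ₀ is positive definite and the feasible set F(𝓜) is nonempty. Then the minimum over F(𝓜) of the total-Δv objective J(x, Δv) = Σ_{i=0}^{N} ‖Δv_i‖ equals 0 if and only if there exists a ballistic feasible solution, i.e. a point (x_0, …, x_N, Δv_0, …, Δv_N) ∈ F(𝓜) with Δv_i = 0 for all i = 0, …, N. -/

import Mathlib

open scoped RealInnerProductSpace

/-- The feasible set `F(𝓜)` of the convexified maneuver-detection problem:
states `x_0, …, x_N ∈ ℝ⁶` and impulses `Δv_0, …, Δv_N ∈ ℝ³` satisfying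
(i) the affine state-transition constraints
    `x_{i+1} = x̃_{i+1} + R_i (x_i − x̃_i) + M_i Δv_i`,
(ii) the per-node impulse bounds `‖Δv_i‖ ≤ Δv_max`, and
(iii) the two Mahalanobis ellipsoid constraints
    `(1/2)(x_0 − μ₀)ᵀΣ₀(x_0 − μ₀) ≤ 𝓜` and `(1/2)(x_N − μ_f)ᵀΣ_f(x_N − μ_f) ≤ 𝓜`. -/
noncomputable def feasibleSet (N : ℕ)
    (xref : Fin (N + 1) → EuclideanSpace ℝ (Fin 6))
    (R : Fin N → Matrix (Fin 6) (Fin 6) ℝ)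
    (M : Fin N → Matrix (Fin 6) (Fin 3) ℝ)
    (μ0 μf : EuclideanSpace ℝ (Fin 6))
    (Sigma0 Sigmaf : Matrix (Fin 6) (Fin 6) ℝ)
    (𝓜 Δvmax : ℝ) :
    Set ((Fin (N + 1) → EuclideanSpace ℝ (Fin 6)) ×
      (Fin (N + 1) → EuclideanSpace ℝ (Fin 3))) :=
  {z | (∀ i : Fin N,
          z.1 i.succ = xref i.succ
            + Matrix.toEuclideanLin (R i) (z.1 i.castSucc - xref i.castSucc)
            + Matrix.toEuclideanLin (M i) (z.2 i.castSucc))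
    ∧ (∀ i : Fin (N + 1), ‖z.2 i‖ ≤ Δvmax)
    ∧ (1 / 2) * ⟪z.1 0 - μ0, Matrix.toEuclideanLin Sigma0 (z.1 0 - μ0)⟫ ≤ 𝓜
    ∧ (1 / 2) * ⟪z.1 (Fin.last N) - μf,
        Matrix.toEuclideanLin Sigmaf (z.1 (Fin.last N) - μf)⟫ ≤ 𝓜}

/-- The total-Δv objective `J(x, Δv) = ∑ i, ‖Δv_i‖`. -/
noncomputable def totalDv (N : ℕ)
    (z : (Fin (N + 1) → EuclideanSpace ℝ (Fin 6)) ×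
      (Fin (N + 1) → EuclideanSpace ℝ (Fin 3))) : ℝ :=
  ∑ i, ‖z.2 i‖

/-- Coercivity of a positive definite quadratic form on Euclidean space. -/
lemma posDef_coercive (S : Matrix (Fin 6) (Fin 6) ℝ) (hS : S.PosDef) :
    ∃ c : ℝ, 0 < c ∧ ∀ y : EuclideanSpace ℝ (Fin 6),
      c * ‖y‖ ^ 2 ≤ ⟪y, Matrix.toEuclideanLin S y⟫ := by
  have hcont : Continuous (fun y : EuclideanSpace ℝ (Fin 6) =>
      (⟪y, Matrix.toEuclideanLin S y⟫ : ℝ)) :=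
    continuous_id.inner (LinearMap.continuous_of_finiteDimensional _)
  have hpos : ∀ y : EuclideanSpace ℝ (Fin 6), y ≠ 0 →
      0 < (⟪y, Matrix.toEuclideanLin S y⟫ : ℝ) := by
    intro y hy
    have h := hS.dotProduct_mulVec_pos (x := y.ofLp) (by simpa using hy)
    rw [EuclideanSpace.inner_eq_star_dotProduct]
    rw [dotProduct_comm]
    simpa using h
  obtain ⟨y0, hy0, hmin⟩ := (isCompact_sphere (0 : EuclideanSpace ℝ (Fin 6)) 1).exists_isMinOn
    (NormedSpace.sphere_nonempty.mpr zero_le_one) hcont.continuousOn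
  refine ⟨_, hpos y0 (ne_zero_of_mem_unit_sphere ⟨y0, hy0⟩), fun y => ?_⟩
  by_cases hy : y = 0
  · simp [hy]
  have hn : 0 < ‖y‖ := norm_pos_iff.mpr hy
  have h := hmin (show (‖y‖⁻¹ • y) ∈ Metric.sphere (0 : EuclideanSpace ℝ (Fin 6)) 1 by
    simp [norm_smul, hn.ne'])
  simp only [Set.mem_setOf_eq, map_smul, inner_smul_left, inner_smul_right] at h
  have h2 := mul_le_mul_of_nonneg_right h (sq_nonneg ‖y‖)
  refine h2.trans (le_of_eq ?_)
  simp only [conj_trivial]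
  field_simp

/-- Maneuver-detection characterization: assume the initial covariance
matrix `Σ₀` is positive definite and the feasible set `F(𝓜)` is nonempty. Then the
minimum (infimum) over `F(𝓜)` of the total-Δv objective `J(x, Δv) = ∑ i, ‖Δv_i‖`
equals `0` if and only if there exists a ballistic feasible solution, i.e. a point of
`F(𝓜)` with `Δv_i = 0` for all `i`. -/
theorem maneuver_detection_characterization (N : ℕ) (hN : 1 ≤ N)
    (xref : Fin (N + 1) → EuclideanSpace ℝ (Fin 6))
    (R : Fin N → Matrix (Fin 6) (Fin 6) ℝ)
    (M : Fin N → Matrix (Fin 6) (Fin 3) ℝ)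
    (μ0 μf : EuclideanSpace ℝ (Fin 6))
    (Sigma0 Sigmaf : Matrix (Fin 6) (Fin 6) ℝ)
    (hS0 : Sigma0.PosDef) (hS0symm : Sigma0.IsSymm)
    (hSf : Sigmaf.PosSemidef) (hSfsymm : Sigmaf.IsSymm)
    (Δvmax : ℝ) (hΔvmax : 0 < Δvmax)
    (𝓜 : ℝ) (h𝓜 : 0 ≤ 𝓜)
    (hne : (feasibleSet N xref R M μ0 μf Sigma0 Sigmaf 𝓜 Δvmax).Nonempty) :
    sInf (totalDv N '' feasibleSet N xref R M μ0 μf Sigma0 Sigmaf 𝓜 Δvmax) = 0 ↔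
      ∃ z ∈ feasibleSet N xref R M μ0 μf Sigma0 Sigmaf 𝓜 Δvmax,
        ∀ i : Fin (N + 1), z.2 i = 0 := by
  have hbdd : BddBelow (totalDv N '' feasibleSet N xref R M μ0 μf Sigma0 Sigmaf 𝓜 Δvmax) := by
    refine ⟨0, ?_⟩
    rintro _ ⟨z, -, rfl⟩
    exact Finset.sum_nonneg fun i _ => norm_nonneg _
  have hlin : ∀ {m n : ℕ} (A : Matrix (Fin m) (Fin n) ℝ),
      Continuous (Matrix.toEuclideanLin A) := fun A =>
    LinearMap.continuous_of_finiteDimensional _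
  constructor
  · intro h0
    have hclosed : IsClosed (feasibleSet N xref R M μ0 μf Sigma0 Sigmaf 𝓜 Δvmax) := by
      have hR := fun i => hlin (R i)
      have hM := fun i => hlin (M i)
      have hS := hlin Sigma0
      have hT := hlin Sigmaf
      unfold feasibleSet
      simp only [Set.setOf_and, Set.setOf_forall]
      refine (isClosed_iInter fun i => isClosed_eq (by fun_prop) ?_).inter
        ((isClosed_iInter fun i => isClosed_le (by fun_prop) (by fun_prop)).inter
          ((isClosed_le ?_ continuous_const).inter (isClosed_le ?_ continuous_const)))
      · exact (continuous_const.add ((hR i).comp (by fun_prop))).add ((hM i).comp (by fun_prop))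
      · exact continuous_const.mul (Continuous.inner (by fun_prop) (hS.comp (by fun_prop)))
      · exact continuous_const.mul (Continuous.inner (by fun_prop) (hT.comp (by fun_prop)))
    obtain ⟨c, hc, hcoer⟩ := posDef_coercive Sigma0 hS0
    have hbound : ∀ i : Fin (N + 1), ∃ C : ℝ,
        ∀ z ∈ feasibleSet N xref R M μ0 μf Sigma0 Sigmaf 𝓜 Δvmax, ‖z.1 i‖ ≤ C := by
      intro i
      induction i using Fin.induction with
      | zero =>
        refine ⟨‖μ0‖ + Real.sqrt (2 * 𝓜 / c), ?_⟩
        rintro z ⟨-, -, h3, -⟩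
        have h4 := hcoer (z.1 0 - μ0)
        have h5 : ‖z.1 0 - μ0‖ ≤ Real.sqrt (2 * 𝓜 / c) := by
          apply Real.le_sqrt_of_sq_le
          rw [le_div_iff₀ hc]
          linarith
        have h6 := norm_le_norm_add_norm_sub' (z.1 0) μ0
        linarith
      | succ i ih =>
        obtain ⟨C, hC⟩ := ih
        set A := LinearMap.toContinuousLinearMap (Matrix.toEuclideanLin (R i)) with hA
        set B := LinearMap.toContinuousLinearMap (Matrix.toEuclideanLin (M i)) with hB
        refine ⟨‖xref i.succ‖ + ‖A‖ * (C + ‖xref i.castSucc‖) + ‖B‖ * Δvmax, ?_⟩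
        intro z hz
        have h1 := hC z hz
        obtain ⟨h2, h3, -, -⟩ := hz
        rw [h2 i]
        refine (norm_add₃_le).trans ?_
        have hA' : ‖Matrix.toEuclideanLin (R i) (z.1 i.castSucc - xref i.castSucc)‖
            ≤ ‖A‖ * (C + ‖xref i.castSucc‖) := by
          refine (A.le_opNorm _).trans ?_
          have := norm_sub_le (z.1 i.castSucc) (xref i.castSucc)
          gcongr
          linarith
        have hB' : ‖Matrix.toEuclideanLin (M i) (z.2 i.castSucc)‖ ≤ ‖B‖ * Δvmax := by
          refine (B.le_opNorm _).trans ?_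
          have := h3 i.castSucc
          gcongr
        linarith
    choose C hC using hbound
    have hcpt : IsCompact (feasibleSet N xref R M μ0 μf Sigma0 Sigmaf 𝓜 Δvmax) := by
      refine IsCompact.of_isClosed_subset
        ((isCompact_univ_pi fun i => isCompact_closedBall (0 : EuclideanSpace ℝ (Fin 6)) (C i)).prod
          (isCompact_univ_pi fun _ : Fin (N + 1) =>
            isCompact_closedBall (0 : EuclideanSpace ℝ (Fin 3)) Δvmax)) hclosed ?_
      intro z hz
      refine ⟨fun i _ => ?_, fun i _ => ?_⟩
      · simpa using hC i z hz
      · simpa using hz.2.1 i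
    have hJ : Continuous (totalDv N) := by
      unfold totalDv
      fun_prop
    obtain ⟨z, hz, hzJ⟩ := (hcpt.image hJ).sInf_mem (hne.image _)
    refine ⟨z, hz, fun i => ?_⟩
    rw [h0, totalDv, Finset.sum_eq_zero_iff_of_nonneg fun i _ => norm_nonneg _] at hzJ
    exact norm_eq_zero.mp (hzJ i (Finset.mem_univ i))
  · rintro ⟨z, hz, hz0⟩
    apply le_antisymm
    · refine csInf_le hbdd ⟨z, hz, ?_⟩
      simp [totalDv, hz0]
    · apply Real.sInf_nonneg
      rintro _ ⟨z, -, rfl⟩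
      exact Finset.sum_nonneg fun i _ => norm_nonneg _
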